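/- arXiv:2107.01060 — 2 statements merged into one kernel-verified Lean document; each statement's English description precedes it below -/
import Mathlib

section
/- Let ρ₁, ρ₂ ∈ M(ℂ^n) be density matrices, let r ≥ 1 and δ ≥ 0, and assume that ρ₁ or ρ₂ is δ-almost rank r. Then ‖ρ₁ − ρ₂‖₂² ≤ 2r (‖ρ₁ − ρ₂‖_∞ + δ)². -/
noncomputable section
open Matrix Kronecker BigOperators
open scoped ComplexOrder

/-- The Frobenius (Hilbert–Schmidt) norm `‖A‖₂ = √Tr(AᴴA)` of a complex matrix. -/
def frobNorm {n : Type*} [Fintype n] (A : Matrix n n ℂ) : ℝ :=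
  Real.sqrt (Matrix.trace (Aᴴ * A)).re

/-- The operator norm `‖A‖_∞` (largest singular value) of a complex matrix. -/
def opNorm {n : Type*} [Fintype n] [DecidableEq n] (A : Matrix n n ℂ) : ℝ :=
  ‖Matrix.toEuclideanCLM (𝕜 := ℂ) A‖

/-- The positive semidefinite square root of a positive semidefinite matrix. -/
def Matrix.PosSemidef.sqrt {n 𝕜 : Type*} [Fintype n] [RCLike 𝕜] [DecidableEq n]
    {A : Matrix n n 𝕜} (hA : A.PosSemidef) : Matrix n n 𝕜 :=
  hA.1.eigenvectorUnitary.1 * Matrix.diagonal ((↑) ∘ Real.sqrt ∘ hA.1.eigenvalues) *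
    (star hA.1.eigenvectorUnitary : Matrix n n 𝕜)

/-- The trace norm `‖A‖₁ = Tr √(AᴴA)` of a complex matrix. -/
def traceNorm {n : Type*} [Fintype n] [DecidableEq n] (A : Matrix n n ℂ) : ℝ :=
  ((Matrix.posSemidef_conjTranspose_mul_self A).sqrt).trace.re

/-- A density matrix: positive semidefinite with trace one. -/
def IsDensity {n : Type*} [Fintype n] (ρ : Matrix n n ℂ) : Prop :=
  ρ.PosSemidef ∧ ρ.trace = 1

/-- A density matrix `ρ` is `δ`-almost rank `r` if there is a density matrix of rank at most `r`
within operator-norm distance `δ` of it. -/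
def AlmostRank {n : Type*} [Fintype n] [DecidableEq n] (r : ℕ) (δ : ℝ) (ρ : Matrix n n ℂ) : Prop :=
  ∃ σ : Matrix n n ℂ, IsDensity σ ∧ σ.rank ≤ r ∧ opNorm (ρ - σ) ≤ δ

/-- The rank-one (outer-product) matrix `|v⟩⟨v|`. -/
def outer {n : Type*} (v : EuclideanSpace ℂ n) : Matrix n n ℂ :=
  Matrix.of fun i j => v i * (starRingEnd ℂ) (v j)

/-- Partial trace over the first tensor factor. -/
def ptrace1 {d : ℕ} (X : Matrix (Fin d × Fin d) (Fin d × Fin d) ℂ) : Matrix (Fin d) (Fin d) ℂ :=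
  Matrix.of fun j j' => ∑ i, X (i, j) (i, j')

/-- Partial trace over the second tensor factor. -/
def ptrace2 {d : ℕ} (X : Matrix (Fin d × Fin d) (Fin d × Fin d) ℂ) : Matrix (Fin d) (Fin d) ℂ :=
  Matrix.of fun i i' => ∑ j, X (i, j) (i', j)

/-- A family of `m` rank-one projectors, each given by a unit vector. -/
def IsRankOneProjFamily {d m : ℕ} (P : Fin m → Matrix (Fin d) (Fin d) ℂ) : Prop :=
  ∀ l, ∃ v : EuclideanSpace ℂ (Fin d), ‖v‖ = 1 ∧ P l = outer v

/-- Near-isotropy: `∑ l, Tr(P l · A) • P l = A + Tr(A) • 𝟙` for every `A`. -/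
def NearIsotropic {d m : ℕ} (P : Fin m → Matrix (Fin d) (Fin d) ℂ) : Prop :=
  ∀ A : Matrix (Fin d) (Fin d) ℂ,
    ∑ l, Matrix.trace (P l * A) • P l = A + Matrix.trace A • (1 : Matrix (Fin d) (Fin d) ℂ)

/-- The real quadratic form of a matrix. -/
def qf {n : ℕ} (A : Matrix (Fin n) (Fin n) ℂ) (v : EuclideanSpace ℂ (Fin n)) : ℝ :=
  (inner ℂ v (Matrix.toEuclideanCLM (𝕜 := ℂ) A v)).re

lemma qf_sub {n : ℕ} (A B : Matrix (Fin n) (Fin n) ℂ) (v : EuclideanSpace ℂ (Fin n)) :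
    qf (A - B) v = qf A v - qf B v := by
  simp [qf, map_sub, inner_sub_right]

lemma abs_qf_le {n : ℕ} (A : Matrix (Fin n) (Fin n) ℂ) (v : EuclideanSpace ℂ (Fin n))
    (hv : ‖v‖ = 1) : |qf A v| ≤ opNorm A := by
  unfold qf opNorm
  refine (Complex.abs_re_le_norm _).trans ((norm_inner_le_norm _ _).trans ?_)
  have := (Matrix.toEuclideanCLM (𝕜 := ℂ) A).le_opNorm v
  rw [hv] at *
  simpa using this

lemma toE_eig {n : ℕ} {A : Matrix (Fin n) (Fin n) ℂ} (hA : A.IsHermitian) (i : Fin n) :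
    Matrix.toEuclideanCLM (𝕜 := ℂ) A (hA.eigenvectorBasis i) =
      (hA.eigenvalues i : ℂ) • hA.eigenvectorBasis i := by
  apply (WithLp.equiv 2 _).injective
  have := hA.mulVec_eigenvectorBasis i
  ext j
  have := congrFun this j
  simpa using this

lemma qf_eq {n : ℕ} {A : Matrix (Fin n) (Fin n) ℂ} (hA : A.IsHermitian)
    (v : EuclideanSpace ℂ (Fin n)) :
    qf A v = ∑ i, hA.eigenvalues i * ‖inner ℂ (hA.eigenvectorBasis i) v‖ ^ 2 := by
  unfold qf
  rw [← hA.eigenvectorBasis.sum_inner_mul_inner, Complex.re_sum]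
  refine Finset.sum_congr rfl fun i _ => ?_
  have hs : ∀ x y, inner ℂ x (Matrix.toEuclideanCLM (𝕜 := ℂ) A y) =
      inner ℂ (Matrix.toEuclideanCLM (𝕜 := ℂ) A x) y := by
    intro x y
    have := (Matrix.isSymmetric_toEuclideanLin_iff.2 hA) x y
    exact this.symm
  rw [hs, toE_eig, inner_smul_left, ← inner_conj_symm v, mul_left_comm, Complex.conj_mul']
  rw [Complex.conj_ofReal, ← Complex.ofReal_pow, ← Complex.ofReal_mul, Complex.ofReal_re]

lemma qf_eig {n : ℕ} {A : Matrix (Fin n) (Fin n) ℂ} (hA : A.IsHermitian) (i : Fin n) :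
    qf A (hA.eigenvectorBasis i) = hA.eigenvalues i := by
  unfold qf
  rw [toE_eig, inner_smul_right, inner_self_eq_norm_sq_to_K]
  simp

lemma sum_eig {n : ℕ} {A : Matrix (Fin n) (Fin n) ℂ} (hA : A.IsHermitian) :
    ∑ i, hA.eigenvalues i = A.trace.re := by
  rw [hA.trace_eq_sum_eigenvalues, Complex.re_sum]
  simp

lemma frob_eig {n : ℕ} {A : Matrix (Fin n) (Fin n) ℂ} (hA : A.IsHermitian) :
    frobNorm A ^ 2 = ∑ i, hA.eigenvalues i ^ 2 := by
  have key : (Matrix.trace (Aᴴ * A)).re = ∑ i, hA.eigenvalues i ^ 2 := by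
    have h1 : Matrix.trace (Aᴴ * A) = ∑ i, (hA.eigenvalues i : ℂ) ^ 2 := by
      rw [hA.eq]
      conv_lhs => rw [hA.spectral_theorem]
      rw [← map_mul, Unitary.conjStarAlgAut_apply, Matrix.trace_mul_comm, ← mul_assoc]
      simp [Matrix.trace, Matrix.diagonal_mul_diagonal, sq]
    rw [h1, Complex.re_sum]
    refine Finset.sum_congr rfl fun i _ => ?_
    rw [← Complex.ofReal_pow, Complex.ofReal_re]
  unfold frobNorm
  rw [key, Real.sq_sqrt (Finset.sum_nonneg fun i _ => sq_nonneg _)]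

/-- For a PSD matrix, the sum of its quadratic form over an orthonormal family is at most
the trace. -/
lemma sum_qf_le_trace {n : ℕ} {A : Matrix (Fin n) (Fin n) ℂ} (hA : A.PosSemidef)
    {ι : Type*} [Fintype ι] (v : ι → EuclideanSpace ℂ (Fin n)) (hv : Orthonormal ℂ v) :
    ∑ j, qf A (v j) ≤ A.trace.re := by
  simp_rw [qf_eq hA.1]
  rw [Finset.sum_comm, ← sum_eig hA.1]
  refine Finset.sum_le_sum fun i _ => ?_
  rw [← Finset.mul_sum]
  have := hv.sum_inner_products_le (s := Finset.univ) (x := hA.1.eigenvectorBasis i)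
  simp only [OrthonormalBasis.norm_eq_one, one_pow] at this
  simp_rw [norm_inner_symm (hA.1.eigenvectorBasis i)]
  exact mul_le_of_le_one_right (hA.eigenvalues_nonneg i) this

lemma qf_nonneg {n : ℕ} {A : Matrix (Fin n) (Fin n) ℂ} (hA : A.PosSemidef)
    (v : EuclideanSpace ℂ (Fin n)) : 0 ≤ qf A v := by
  rw [qf_eq hA.1]
  exact Finset.sum_nonneg fun i _ => mul_nonneg (hA.eigenvalues_nonneg i) (sq_nonneg _)

/-- Main estimate in the case where the first matrix is almost rank `r`. -/
lemma main_aux (n : ℕ) (ρ₁ ρ₂ : Matrix (Fin n) (Fin n) ℂ)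
    (h₁ : IsDensity ρ₁) (h₂ : IsDensity ρ₂) (r : ℕ) (δ : ℝ) (hδ : 0 ≤ δ)
    (h : AlmostRank r δ ρ₁) :
    frobNorm (ρ₁ - ρ₂) ^ 2 ≤ 2 * r * (opNorm (ρ₁ - ρ₂) + δ) ^ 2 := by
  obtain ⟨σ, hσ, hrank, hd⟩ := h
  have hΔ : (ρ₁ - ρ₂).IsHermitian := h₁.1.1.sub h₂.1.1
  set D := opNorm (ρ₁ - ρ₂) with hD
  have hD0 : 0 ≤ D := norm_nonneg _
  set l := hΔ.eigenvalues with hl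
  set e := hΔ.eigenvectorBasis with he
  have hlD : ∀ i, |l i| ≤ D := fun i => by
    have := abs_qf_le (ρ₁ - ρ₂) (e i) (e.norm_eq_one i)
    rwa [qf_eig] at this
  have hl0 : ∑ i, l i = 0 := by
    rw [hl, sum_eig, Matrix.trace_sub, h₁.2, h₂.2]; simp
  let S := {i // hσ.1.1.eigenvalues i ≠ 0}
  let f := hσ.1.1.eigenvectorBasis
  let fS : S → EuclideanSpace ℂ (Fin n) := fun i => f i.1
  have hfS : Orthonormal ℂ fS := f.orthonormal.comp _ Subtype.val_injective
  have hScard : Fintype.card S ≤ r := by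
    rw [← hσ.1.1.rank_eq_card_non_zero_eigs]; exact hrank
  let P := {i // 0 < l i}
  let eP : P → EuclideanSpace ℂ (Fin n) := fun i => e i.1
  have heP : Orthonormal ℂ eP := e.orthonormal.comp _ Subtype.val_injective
  let V := Submodule.span ℂ (Set.range eP)
  let U := Submodule.span ℂ (Set.range fS)
  have hV : Module.finrank ℂ V = Fintype.card P := finrank_span_eq_card heP.linearIndependent
  have hU : Module.finrank ℂ U = Fintype.card S := finrank_span_eq_card hfS.linearIndependent
  let W := V ⊓ Uᗮ
  have hW : Fintype.card P ≤ Module.finrank ℂ W + r := by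
    have h1 := Submodule.finrank_sup_add_finrank_inf_eq V Uᗮ
    have h2 := U.finrank_add_finrank_orthogonal
    have h3 := Submodule.finrank_le (V ⊔ Uᗮ)
    change _ ≤ Module.finrank ℂ (V ⊓ Uᗮ : Submodule ℂ _) + r
    omega
  let b := stdOrthonormalBasis ℂ W
  let w : Fin (Module.finrank ℂ W) → EuclideanSpace ℂ (Fin n) := fun j => (b j : _)
  have hw : Orthonormal ℂ w := b.orthonormal.comp_linearIsometry W.subtypeₗᵢ
  have hwV : ∀ j, w j ∈ V := fun j => (b j).2.1
  have hwU : ∀ j, w j ∈ Uᗮ := fun j => (b j).2.2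
  -- the tail of `ρ₁`
  have tail : ∑ j, qf ρ₁ (w j) ≤ r * δ := by
    have hor : Orthonormal ℂ (Sum.elim w fS) := by
      have hfw : ∀ i j, inner ℂ (fS i) (w j) = 0 := fun i j =>
        Submodule.inner_right_of_mem_orthogonal (Submodule.subset_span (Set.mem_range_self i) : fS i ∈ U) (hwU j)
      have hwf : ∀ i j, inner ℂ (w j) (fS i) = 0 := fun i j =>
        inner_eq_zero_symm.1 (hfw i j)
      refine ⟨?_, ?_⟩
      · rintro (j | i)
        · exact hw.1 j
        · exact hfS.1 i
      · rintro (j | i) (j' | i') hne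
        · exact hw.2 fun h => hne (by rw [h])
        · exact hwf _ _
        · exact hfw _ _
        · exact hfS.2 fun h => hne (by rw [h])
    have h1 := sum_qf_le_trace h₁.1 _ hor
    rw [Fintype.sum_sum_type, h₁.2] at h1
    simp only [Sum.elim_inl, Sum.elim_inr, Complex.one_re] at h1
    have h2 : ∑ i : S, (hσ.1.1.eigenvalues i.1 - δ) ≤ ∑ i, qf ρ₁ (fS i) := by
      refine Finset.sum_le_sum fun i _ => ?_
      have h3 := abs_qf_le (ρ₁ - σ) (fS i) (hfS.1 i)
      rw [qf_sub] at h3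
      have h4 : qf σ (fS i) = _ := qf_eig hσ.1.1 i.1
      rw [h4] at h3
      have := (abs_le.1 h3).1
      linarith
    have h5 : ∑ i : S, hσ.1.1.eigenvalues i.1 = 1 := by
      have h6 : ∑ i, hσ.1.1.eigenvalues i = 1 :=
        (sum_eig hσ.1.1).trans ((congrArg Complex.re hσ.2).trans Complex.one_re)
      rw [← Finset.sum_filter_ne_zero] at h6
      rw [← h6]
      exact (Finset.sum_subtype _ (fun x => by simp) _).symm
    rw [Finset.sum_sub_distrib, h5, Finset.sum_const, Finset.card_univ, nsmul_eq_mul] at h2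
    have h7 : (Fintype.card S : ℝ) * δ ≤ r * δ := by gcongr
    linarith
  let c : Fin n → ℝ := fun i => ∑ j, ‖inner ℂ (e i) (w j)‖ ^ 2
  have hc0 : ∀ i, 0 ≤ c i := fun i => Finset.sum_nonneg fun j _ => sq_nonneg _
  have hc1 : ∀ i, c i ≤ 1 := fun i => by
    have := hw.sum_inner_products_le (s := Finset.univ) (x := e i)
    simp only [OrthonormalBasis.norm_eq_one, one_pow] at this
    simp_rw [norm_inner_symm _ (e i)] at this
    exact this
  have hcz : ∀ i, ¬ 0 < l i → c i = 0 := fun i hi => by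
    refine Finset.sum_eq_zero fun j _ => ?_
    have : w j ∈ (ℂ ∙ e i)ᗮ := by
      refine (Submodule.span_le.2 ?_ : V ≤ _) (hwV j)
      rintro _ ⟨p, rfl⟩
      rw [SetLike.mem_coe, Submodule.mem_orthogonal_singleton_iff_inner_right]
      refine e.orthonormal.2 fun h => hi ?_
      rw [h]; exact p.2
    rw [Submodule.mem_orthogonal_singleton_iff_inner_right] at this
    simp [this]
  have hcs : ∑ i, c i = Module.finrank ℂ W := by
    simp only [c]
    rw [Finset.sum_comm]
    simp_rw [e.sum_sq_norm_inner_right, hw.1]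
    simp
  have hlc : ∑ i, l i * c i ≤ r * δ := by
    refine le_trans ?_ tail
    simp only [c, Finset.mul_sum]
    rw [Finset.sum_comm]
    refine Finset.sum_le_sum fun j _ => ?_
    rw [← qf_eq hΔ, qf_sub]
    linarith [qf_nonneg h₂.1 (w j)]
  have hPcard : ∑ i, (if 0 < l i then (1:ℝ) else 0) = Fintype.card P := by
    rw [Finset.sum_boole, Fintype.card_subtype]
  have hpos : ∑ i, max (l i) 0 ≤ r * δ + r * D := by
    have h1 : ∀ i, max (l i) 0 ≤ l i * c i + D * ((if 0 < l i then (1:ℝ) else 0) - c i) := by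
      intro i
      by_cases hi : 0 < l i
      · rw [if_pos hi, max_eq_left hi.le]
        nlinarith [hc1 i, le_abs_self (l i), hlD i]
      · rw [if_neg hi, hcz i hi, max_eq_right (not_lt.1 hi)]; simp
    have h2 := Finset.sum_le_sum fun i (_ : i ∈ Finset.univ) => h1 i
    rw [Finset.sum_add_distrib, ← Finset.mul_sum, Finset.sum_sub_distrib, hPcard, hcs] at h2
    have h3 : (Fintype.card P : ℝ) ≤ Module.finrank ℂ W + r := by exact_mod_cast hW
    nlinarith
  rw [frob_eig hΔ]
  have h1 : ∀ i, l i ^ 2 ≤ D * (2 * max (l i) 0 - l i) := by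
    intro i
    have : 2 * max (l i) 0 - l i = |l i| := by
      rcases le_total 0 (l i) with h | h
      · rw [max_eq_left h, abs_of_nonneg h]; ring
      · rw [max_eq_right h, abs_of_nonpos h]; ring
    rw [this, ← sq_abs, sq]
    exact mul_le_mul_of_nonneg_right (hlD i) (abs_nonneg _)
  have h2 := Finset.sum_le_sum fun i (_ : i ∈ Finset.univ) => h1 i
  rw [← Finset.mul_sum, Finset.sum_sub_distrib, ← Finset.mul_sum, hl0] at h2
  have h3 : D * (2 * ∑ i, max (l i) 0 - 0) ≤ D * (2 * (r * δ + r * D) - 0) := by gcongr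
  have h4 : 0 ≤ (r : ℝ) * δ * (D + δ) := by positivity
  nlinarith

lemma frobNorm_sub_comm {n : ℕ} (A B : Matrix (Fin n) (Fin n) ℂ) :
    frobNorm (A - B) = frobNorm (B - A) := by
  unfold frobNorm
  rw [← neg_sub B A, Matrix.conjTranspose_neg, neg_mul_neg]

lemma opNorm_sub_comm {n : ℕ} (A B : Matrix (Fin n) (Fin n) ℂ) :
    opNorm (A - B) = opNorm (B - A) := by
  unfold opNorm
  rw [← neg_sub B A, map_neg, norm_neg]

/-- Lemma 4: if one of two density matrices is `δ`-almost rank `r`, then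
`‖ρ₁ − ρ₂‖₂² ≤ 2r(‖ρ₁ − ρ₂‖_∞ + δ)²`. -/
theorem frobNorm_sq_le_of_almostRank (n : ℕ) (ρ₁ ρ₂ : Matrix (Fin n) (Fin n) ℂ)
    (h₁ : IsDensity ρ₁) (h₂ : IsDensity ρ₂)
    (r : ℕ) (hr : 1 ≤ r) (δ : ℝ) (hδ : 0 ≤ δ)
    (h : AlmostRank r δ ρ₁ ∨ AlmostRank r δ ρ₂) :
    frobNorm (ρ₁ - ρ₂) ^ 2 ≤ 2 * r * (opNorm (ρ₁ - ρ₂) + δ) ^ 2 := by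
  rcases h with h | h
  · exact main_aux n ρ₁ ρ₂ h₁ h₂ r δ hδ h
  · rw [frobNorm_sub_comm, opNorm_sub_comm]
    exact main_aux n ρ₂ ρ₁ h₂ h₁ r δ hδ h
end
end

section
/- Let Φ, B, S ∈ M(ℂ^n) be density matrices and τ ≥ 0, δ ≥ 0, r ≥ 1. Assume ‖B − Φ‖_∞ ≤ 2τ and ‖S − Φ‖₂ ≤ ‖B − Φ‖₂, and assume that B is δ-almost rank r. Then ‖S − Φ‖₁ ≤ r ( (4√2 + 2)δ + (4 + 8√2) · τ ). -/
noncomputable section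
open Matrix Kronecker BigOperators
open scoped ComplexOrder

namespace PLS
variable {n : ℕ}

abbrev E (n : ℕ) := EuclideanSpace ℂ (Fin n)
abbrev Mat (n : ℕ) := Matrix (Fin n) (Fin n) ℂ

/-- Matrix as an operator. -/
abbrev L (A : Mat n) : E n →L[ℂ] E n := Matrix.toEuclideanCLM (𝕜 := ℂ) A

/-- Quadratic form. -/
def q (A : Mat n) (v : E n) : ℝ := (inner ℂ v (L A v)).re

lemma q_add (A C : Mat n) (v : E n) : q (A + C) v = q A v + q C v := by
  simp [q, L, inner_add_right]

lemma q_sub (A C : Mat n) (v : E n) : q (A - C) v = q A v - q C v := by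
  simp [q, L, inner_sub_right]

lemma abs_q_le_norm (A : Mat n) (v : E n) (hv : ‖v‖ = 1) : |q A v| ≤ ‖L A v‖ := by
  have h1 := Complex.abs_re_le_norm (inner ℂ v (L A v))
  have h2 := norm_inner_le_norm (𝕜 := ℂ) v (L A v)
  rw [hv, one_mul] at h2
  exact h1.trans h2

lemma abs_q_le (A : Mat n) (v : E n) (hv : ‖v‖ = 1) : |q A v| ≤ opNorm A := by
  have h3 := (L A).le_opNorm v
  rw [hv, mul_one] at h3
  exact (abs_q_le_norm A v hv).trans h3

lemma sum_q (A : Mat n) (b : OrthonormalBasis (Fin n) ℂ (E n)) :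
    ∑ i, q A (b i) = A.trace.re := by
  have h := LinearMap.trace_eq_sum_inner (Matrix.toEuclideanLin A) b
  have h2 : LinearMap.trace ℂ _ (Matrix.toEuclideanLin A) = A.trace := by
    rw [Matrix.toEuclideanLin_eq_toLin, Matrix.trace_toLin_eq]
  rw [← h2, h, Complex.re_sum]
  rfl

lemma q_star_mul (A : Mat n) (v : E n) : q (Aᴴ * A) v = ‖L A v‖ ^ 2 := by
  have : L (Aᴴ * A) = (L A).adjoint * L A := by
    have := map_star (Matrix.toEuclideanCLM (𝕜 := ℂ) (n := Fin n)) A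
    simp only [L, map_mul]
    rw [← Matrix.star_eq_conjTranspose, this]
    rfl
  unfold q
  rw [this, ContinuousLinearMap.mul_apply, ContinuousLinearMap.adjoint_inner_right,
    inner_self_eq_norm_sq_to_K]
  norm_cast

lemma frob_sq (A : Mat n) (b : OrthonormalBasis (Fin n) ℂ (E n)) :
    frobNorm A ^ 2 = ∑ i, ‖L A (b i)‖ ^ 2 := by
  have h := sum_q (Aᴴ * A) b
  simp only [q_star_mul] at h
  rw [frobNorm, Real.sq_sqrt, h]
  rw [← h]; positivity

lemma q_nonneg {A : Mat n} (hA : A.PosSemidef) (v : E n) : 0 ≤ q A v := by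
  have := (Matrix.isPositive_toEuclideanLin_iff.2 hA).re_inner_nonneg_right v
  exact this

/-- sum of absolute eigenvalues -/
def T {A : Mat n} (hA : A.IsHermitian) : ℝ := ∑ i, |hA.eigenvalues i|

lemma L_eig {A : Mat n} (hA : A.IsHermitian) (i : Fin n) :
    L A (hA.eigenvectorBasis i) = (hA.eigenvalues i : ℂ) • hA.eigenvectorBasis i := by
  have h := hA.mulVec_eigenvectorBasis i
  apply (WithLp.ofLp_injective 2)
  simpa [L] using h

lemma q_eig {A : Mat n} (hA : A.IsHermitian) (i : Fin n) :
    q A (hA.eigenvectorBasis i) = hA.eigenvalues i := by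
  rw [q, L_eig, inner_smul_right, inner_self_eq_norm_sq_to_K]
  simp

lemma q_expand {A : Mat n} (hA : A.IsHermitian) (v : E n) :
    q A v = ∑ i, hA.eigenvalues i * ‖inner ℂ (hA.eigenvectorBasis i) v‖ ^ 2 := by
  have hv : L A v = ∑ i, inner ℂ (hA.eigenvectorBasis i) v •
      ((hA.eigenvalues i : ℂ) • hA.eigenvectorBasis i) := by
    conv_lhs => rw [← hA.eigenvectorBasis.sum_repr' v]
    rw [map_sum]
    simp only [map_smul, L_eig]
  rw [q, hv, inner_sum, Complex.re_sum]
  refine Finset.sum_congr rfl fun i _ => ?_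
  rw [inner_smul_right, inner_smul_right, ← inner_conj_symm v]
  rw [mul_left_comm, Complex.mul_conj, Complex.normSq_eq_norm_sq]
  norm_cast

lemma sum_abs_q_le {A : Mat n} (hA : A.IsHermitian) (b : OrthonormalBasis (Fin n) ℂ (E n)) :
    ∑ i, |q A (b i)| ≤ T hA := by
  calc ∑ i, |q A (b i)| ≤ ∑ i, ∑ j, |hA.eigenvalues j| *
        ‖inner ℂ (hA.eigenvectorBasis j) (b i)‖ ^ 2 := by
        refine Finset.sum_le_sum fun i _ => ?_
        rw [q_expand hA]
        refine (Finset.abs_sum_le_sum_abs _ _).trans (le_of_eq ?_)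
        refine Finset.sum_congr rfl fun j _ => ?_
        rw [abs_mul, abs_of_nonneg (by positivity : (0:ℝ) ≤ ‖_‖ ^ 2)]
    _ = T hA := by
        rw [Finset.sum_comm]
        refine Finset.sum_congr rfl fun j _ => ?_
        rw [← Finset.mul_sum, b.sum_sq_norm_inner_left]
        simp

/-- Triangle inequality, in the form needed. -/
lemma T_sub_le {A C D : Mat n} (h : (A - C).IsHermitian) (h1 : (A - D).IsHermitian)
    (h2 : (C - D).IsHermitian) : T h ≤ T h1 + T h2 := by
  refine le_trans ?_ (add_le_add (sum_abs_q_le h1 h.eigenvectorBasis)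
    (sum_abs_q_le h2 h.eigenvectorBasis))
  rw [← Finset.sum_add_distrib]
  refine Finset.sum_le_sum fun i _ => ?_
  have e : q (A - C) (h.eigenvectorBasis i) = q (A - D) (h.eigenvectorBasis i)
      - q (C - D) (h.eigenvectorBasis i) := by
    rw [← q_sub]; congr 1; abel
  rw [← q_eig h i, e]
  exact abs_sub _ _

lemma frob_sq_le {A : Mat n} (hA : A.IsHermitian) : frobNorm A ^ 2 ≤ T hA * opNorm A := by
  rw [frob_sq A hA.eigenvectorBasis, T, Finset.sum_mul]
  refine Finset.sum_le_sum fun i _ => ?_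
  rw [L_eig, norm_smul]
  simp only [OrthonormalBasis.norm_eq_one, mul_one, Complex.norm_real, Real.norm_eq_abs]
  rw [sq]
  refine mul_le_mul_of_nonneg_left ?_ (abs_nonneg _)
  rw [← q_eig hA i]
  exact abs_q_le A _ (by simp)

lemma sum_abs_q_le_frob (A : Mat n) (b : OrthonormalBasis (Fin n) ℂ (E n)) (s : Finset (Fin n)) :
    ∑ i ∈ s, |q A (b i)| ≤ Real.sqrt s.card * frobNorm A := by
  have h0 : 0 ≤ frobNorm A := Real.sqrt_nonneg _
  refine abs_le_of_sq_le_sq' ?_ (by positivity) |>.2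
  rw [mul_pow, Real.sq_sqrt (by positivity), frob_sq A b]
  refine (sq_sum_le_card_mul_sum_sq).trans ?_
  refine mul_le_mul_of_nonneg_left ?_ (by positivity)
  refine le_trans ?_ (Finset.sum_le_sum_of_subset_of_nonneg (Finset.subset_univ s)
    fun i _ _ => by positivity)
  refine Finset.sum_le_sum fun i _ => ?_
  have := abs_q_le_norm A (b i) (by simp)
  gcongr

/-- indices of negative eigenvalues -/
def neg {A : Mat n} (hA : A.IsHermitian) : Finset (Fin n) :=
  Finset.univ.filter fun i => hA.eigenvalues i < 0

lemma T_eq_neg {A : Mat n} (hA : A.IsHermitian) (ht : A.trace = 0) :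
    T hA = 2 * ∑ i ∈ neg hA, (- q A (hA.eigenvectorBasis i)) := by
  have h := sum_q A hA.eigenvectorBasis
  rw [ht] at h
  simp only [q_eig, Complex.zero_re] at h
  simp only [q_eig, neg, Finset.sum_filter, T]
  rw [Finset.mul_sum, ← sub_zero (∑ i, |hA.eigenvalues i|)]
  conv_lhs => rw [← h]
  rw [← Finset.sum_sub_distrib]
  refine Finset.sum_congr rfl fun i _ => ?_
  split_ifs with hi
  · rw [abs_of_neg hi]; ring
  · rw [abs_of_nonneg (not_lt.1 hi)]; ring

lemma card_neg_le {ρ σ : Mat n} (hρ : ρ.PosSemidef) (h : (ρ - σ).IsHermitian) :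
    (neg h).card ≤ σ.rank := by
  set v := h.eigenvectorBasis with hv
  have hli : LinearIndependent ℂ (fun i : neg h => Matrix.toEuclideanLin σ (v i)) := by
    rw [Fintype.linearIndependent_iff]
    intro c hc
    set w : E n := ∑ i : neg h, c i • v i with hw
    have hσw : L σ w = 0 := by
      rw [hw, map_sum]; simp only [map_smul]; exact hc
    have h0 : 0 ≤ q (ρ - σ) w := by
      rw [q_sub]
      have : q σ w = 0 := by simp [q, hσw]
      rw [this, sub_zero]; exact q_nonneg hρ w
    have hin : ∀ i : neg h, inner ℂ (v i) w = c i := by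
      intro i
      rw [hw, inner_sum]
      simp only [inner_smul_right, v.inner_eq_ite]
      rw [Finset.sum_eq_single i]
      · simp
      · intro j _ hj
        rw [if_neg (fun hh => hj (Subtype.ext hh.symm)), mul_zero]
      · simp
    have hout : ∀ i, i ∉ neg h → inner ℂ (v i) w = 0 := by
      intro i hi
      rw [hw, inner_sum]
      refine Finset.sum_eq_zero fun j _ => ?_
      rw [inner_smul_right, v.inner_eq_zero, mul_zero]
      rintro rfl
      exact hi j.2
    rw [q_expand h] at h0
    have hle : ∀ i ∈ Finset.univ, h.eigenvalues i * ‖inner ℂ (v i) w‖ ^ 2 ≤ 0 := by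
      intro i _
      by_cases hi : i ∈ neg h
      · have : h.eigenvalues i < 0 := (Finset.mem_filter.1 hi).2
        exact mul_nonpos_of_nonpos_of_nonneg this.le (by positivity)
      · rw [hout i hi]; simp
    have heq := (Finset.sum_eq_zero_iff_of_nonpos hle).1
      (le_antisymm (Finset.sum_nonpos hle) h0)
    intro i
    have h1 := heq i (Finset.mem_univ _)
    have h2 : h.eigenvalues i < 0 := (Finset.mem_filter.1 i.2).2
    rw [hin i] at h1
    rcases mul_eq_zero.1 h1 with h3 | h3
    · exact absurd h3 h2.ne
    · simpa using h3
  have hcard := finrank_span_eq_card hli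
  rw [Fintype.card_coe] at hcard
  rw [← hcard, Matrix.rank_eq_finrank_range_toLin σ (PiLp.basisFun 2 ℂ (Fin n))
    (PiLp.basisFun 2 ℂ (Fin n)), ← Matrix.toEuclideanLin_eq_toLin]
  refine Submodule.finrank_mono ?_
  rw [Submodule.span_le]
  rintro _ ⟨i, rfl⟩
  exact ⟨_, rfl⟩

open scoped MatrixOrder in
lemma traceNorm_eq {A : Mat n} (hA : A.IsHermitian) : traceNorm A = T hA := by
  have key : ∀ (U : Matrix.unitaryGroup (Fin n) ℂ) (d : Fin n → ℝ), (∀ i, 0 ≤ d i) →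
      0 ≤ U.1 * Matrix.diagonal (fun i => (d i : ℂ)) * (star U.1) := by
    intro U d hd
    rw [Matrix.nonneg_iff_posSemidef]
    have : (Matrix.diagonal (fun i => (d i : ℂ))).PosSemidef :=
      Matrix.PosSemidef.diagonal fun i => by simpa using hd i
    exact this.mul_mul_conjTranspose_same U.1
  have key2 : ∀ (U : Matrix.unitaryGroup (Fin n) ℂ) (d e : Fin n → ℂ),
      (U.1 * Matrix.diagonal d * (star U.1)) * (U.1 * Matrix.diagonal e * (star U.1))
       = U.1 * Matrix.diagonal (fun i => d i * e i) * (star U.1) := by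
    intro U d e
    have : star U.1 * U.1 = 1 := Unitary.coe_star_mul_self U
    rw [← Matrix.diagonal_mul_diagonal]
    calc _ = U.1 * Matrix.diagonal d * (star U.1 * U.1) * Matrix.diagonal e * star U.1 := by
          simp only [mul_assoc]
      _ = _ := by rw [this]; simp only [mul_assoc, one_mul]
  have key3 : ∀ (U : Matrix.unitaryGroup (Fin n) ℂ) (D : Mat n),
      (U.1 * D * (star U.1)).trace = D.trace := by
    intro U D
    rw [Matrix.trace_mul_comm, ← mul_assoc, Unitary.coe_star_mul_self, one_mul]
  have hP := Matrix.posSemidef_conjTranspose_mul_self A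
  set U := hA.eigenvectorUnitary
  have hAs : A = U.1 * Matrix.diagonal (fun i => (hA.eigenvalues i : ℂ)) * star U.1 :=
    hA.spectral_theorem
  have e1 : CFC.sqrt (Aᴴ * A) = hP.sqrt := by
    apply CFC.sqrt_unique
    · conv_rhs => rw [hP.1.spectral_theorem]
      unfold Matrix.PosSemidef.sqrt
      refine (key2 _ _ _).trans ?_
      rw [Unitary.conjStarAlgAut_apply]
      congr 3
      funext i
      simp only [Function.comp]
      have := Real.mul_self_sqrt (hP.eigenvalues_nonneg i)
      exact_mod_cast this
    · exact key _ _ fun i => Real.sqrt_nonneg _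
  have e2 : CFC.sqrt (Aᴴ * A) =
      U.1 * Matrix.diagonal (fun i => ((|hA.eigenvalues i| : ℝ) : ℂ)) * star U.1 := by
    apply CFC.sqrt_unique
    · rw [key2, hA.eq]
      conv_rhs => rw [hAs]
      rw [key2]
      congr 3
      funext i
      have := abs_mul_abs_self (hA.eigenvalues i)
      exact_mod_cast this
    · exact key _ _ fun i => abs_nonneg _
  unfold traceNorm
  rw [← e1, e2, key3, Matrix.trace_diagonal, Complex.re_sum]
  rfl

lemma T_density_le {ρ σ : Mat n} (hρ : IsDensity ρ) (hσ : IsDensity σ) {r : ℕ}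
    (hr : σ.rank ≤ r) (h : (ρ - σ).IsHermitian) {e : ℝ} (he : opNorm (ρ - σ) ≤ e) :
    T h ≤ 2 * (r * e) := by
  have hc : (neg h).card ≤ r := (card_neg_le hρ.1 h).trans hr
  have h0 : 0 ≤ e := (norm_nonneg _).trans he
  rw [T_eq_neg h (by rw [Matrix.trace_sub, hρ.2, hσ.2, sub_self])]
  have := Finset.sum_le_card_nsmul (neg h) (fun i => -q (ρ - σ) (h.eigenvectorBasis i)) e
    (fun i _ => (neg_le_abs _).trans ((abs_q_le _ _ (by simp)).trans he))
  rw [nsmul_eq_mul] at this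
  have h2 : ((neg h).card : ℝ) * e ≤ r * e := by gcongr
  linarith

end PLS

/-- deterministic trace-norm content of Theorem 4, eq. (50): if `Φ, B, S` are
density matrices, `‖B − Φ‖_∞ ≤ 2τ`, `‖S − Φ‖₂ ≤ ‖B − Φ‖₂`, and the intermediate estimator `B` is
`δ`-almost rank `r`, then `‖S − Φ‖₁ ≤ r((4√2 + 2)δ + (4 + 8√2)τ)`. -/
theorem pls_traceNorm_deterministic_bound_intermediate (n : ℕ)
    (Φ B S : Matrix (Fin n) (Fin n) ℂ)
    (hΦ : IsDensity Φ) (hB : IsDensity B) (hS : IsDensity S)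
    (τ δ : ℝ) (r : ℕ) (hτ : 0 ≤ τ) (hδ : 0 ≤ δ) (hr : 1 ≤ r)
    (h₁ : opNorm (B - Φ) ≤ 2 * τ)
    (h₂ : frobNorm (S - Φ) ≤ frobNorm (B - Φ))
    (h₃ : AlmostRank r δ B) :
    traceNorm (S - Φ) ≤ r * ((4 * Real.sqrt 2 + 2) * δ + (4 + 8 * Real.sqrt 2) * τ) := by
  obtain ⟨σ, hσ, hrk, hδσ⟩ := h₃
  set ε := δ + 2 * τ with hε
  have hε0 : 0 ≤ ε := by positivity
  have hΦσ : opNorm (Φ - σ) ≤ ε := by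
    have : PLS.L (Φ - σ) = PLS.L (B - σ) - PLS.L (B - Φ) := by
      rw [← map_sub]; congr 1; abel
    unfold opNorm at *
    change ‖PLS.L (Φ - σ)‖ ≤ _
    rw [this]
    refine (norm_sub_le _ _).trans ?_
    exact add_le_add hδσ h₁
  have hSΦ := hS.1.1.sub hΦ.1.1
  have hBΦ := hB.1.1.sub hΦ.1.1
  have hSσ := hS.1.1.sub hσ.1.1
  have hBσ := hB.1.1.sub hσ.1.1
  have hΦσ' := hΦ.1.1.sub hσ.1.1
  rw [PLS.traceNorm_eq hSΦ]
  have t1 := PLS.T_density_le hB hσ hrk hBσ hδσ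
  have t2 := PLS.T_density_le hΦ hσ hrk hΦσ' hΦσ
  have t3 := PLS.T_sub_le hBΦ hBσ hΦσ'
  have t4 := PLS.T_sub_le hSΦ hSσ hΦσ'
  have f1 : frobNorm (B - Φ) ^ 2 ≤ 2 * r * ε ^ 2 := by
    refine (PLS.frob_sq_le hBΦ).trans ?_
    have : PLS.T hBΦ * opNorm (B - Φ) ≤ (2 * (r * δ) + 2 * (r * ε)) * (2 * τ) := by
      refine mul_le_mul (by linarith) h₁ (norm_nonneg _) (by positivity)
    refine this.trans ?_
    have hh : (0:ℝ) ≤ r * δ ^ 2 := by positivity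
    rw [hε]
    nlinarith
  have f2 : frobNorm (S - Φ) ≤ Real.sqrt r * (Real.sqrt 2 * ε) := by
    refine h₂.trans (abs_le_of_sq_le_sq' ?_ (by positivity)).2
    rw [mul_pow, mul_pow, Real.sq_sqrt (by positivity), Real.sq_sqrt (by positivity)]
    linarith
  have hc : (PLS.neg hSσ).card ≤ r := (PLS.card_neg_le hS.1 hSσ).trans hrk
  have hc' : ((PLS.neg hSσ).card : ℝ) ≤ r := by exact_mod_cast hc
  have t5 : PLS.T hSσ ≤ 2 * (r * (Real.sqrt 2 * ε) + r * ε) := by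
    rw [PLS.T_eq_neg hSσ (by rw [Matrix.trace_sub, hS.2, hσ.2, sub_self])]
    refine mul_le_mul_of_nonneg_left ?_ (by norm_num)
    have s1 := PLS.sum_abs_q_le_frob (S - Φ) hSσ.eigenvectorBasis (PLS.neg hSσ)
    have s2 := Finset.sum_le_card_nsmul (PLS.neg hSσ)
      (fun i => |PLS.q (Φ - σ) (hSσ.eigenvectorBasis i)|) ε
      (fun i _ => (PLS.abs_q_le _ _ (by simp)).trans hΦσ)
    rw [nsmul_eq_mul] at s2
    have s3 : ((PLS.neg hSσ).card : ℝ) * ε ≤ r * ε := by gcongr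
    have s4 : Real.sqrt (PLS.neg hSσ).card * frobNorm (S - Φ) ≤ r * (Real.sqrt 2 * ε) := by
      calc _ ≤ Real.sqrt r * (Real.sqrt r * (Real.sqrt 2 * ε)) := by
            refine mul_le_mul (Real.sqrt_le_sqrt hc') f2 (Real.sqrt_nonneg _) (Real.sqrt_nonneg _)
        _ = _ := by rw [← mul_assoc, Real.mul_self_sqrt (by positivity)]
    refine le_trans ?_ (add_le_add (s1.trans s4) (s2.trans s3))
    rw [← Finset.sum_add_distrib]
    refine Finset.sum_le_sum fun i _ => ?_
    have : PLS.q (S - σ) (hSσ.eigenvectorBasis i) = PLS.q (S - Φ) (hSσ.eigenvectorBasis i)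
        + PLS.q (Φ - σ) (hSσ.eigenvectorBasis i) := by
      rw [← PLS.q_add]; congr 1; abel
    rw [this, neg_add]
    exact add_le_add (neg_le_abs _) (neg_le_abs _)
  have h2 : (1:ℝ) ≤ Real.sqrt 2 := by
    rw [Real.one_le_sqrt]; norm_num
  have hrε : 0 ≤ (r:ℝ) * ε := by positivity
  have hgoal : (r:ℝ) * ((4 * Real.sqrt 2 + 2) * δ + (4 + 8 * Real.sqrt 2) * τ)
      = (4 * Real.sqrt 2 + 2) * (r * ε) := by rw [hε]; ring
  rw [hgoal]
  nlinarith
end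
end
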